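/- If S is an almost-clique minimal separator of a finite simple graph G, then filling S into a clique does not increase the treewidth: tw(G ∪ K(S)) = tw(G). -/

import Mathlib

/-- A tree-decomposition of a graph `G` indexed by nodes of type `ι`. -/
structure TreeDecomp {V : Type} (G : SimpleGraph V) (ι : Type) where
  tree : SimpleGraph ι
  isTree : tree.IsTree
  bag : ι → Finset V
  bags_cover : ∀ v : V, ∃ i : ι, v ∈ bag i
  edges_covered : ∀ ⦃u v : V⦄, G.Adj u v → ∃ i : ι, u ∈ bag i ∧ v ∈ bag i
  bags_connected : ∀ v : V, (tree.induce {i : ι | v ∈ bag i}).Connected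

/-- The treewidth of `G`: the smallest `k` such that `G` has a tree-decomposition
all of whose bags have at most `k + 1` vertices (i.e. of width at most `k`). -/
noncomputable def treewidth {V : Type} (G : SimpleGraph V) : ℕ :=
  sInf { k : ℕ | ∃ (ι : Type) (td : TreeDecomp G ι), ∀ i : ι, (td.bag i).card ≤ k + 1 }

/-- The neighborhood `N_G(C)` of a vertex set `C`. -/
def nbhd {V : Type} (G : SimpleGraph V) (C : Set V) : Set V :=
  {v : V | v ∉ C ∧ ∃ u ∈ C, G.Adj u v}

/-- `S` separates `a` from `b` in `G`: `a, b ∉ S` and every walk from `a` to `b` meets `S`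
(so `a` and `b` lie in distinct components of `G` minus `S`). -/
def Separates {V : Type} (G : SimpleGraph V) (S : Set V) (a b : V) : Prop :=
  a ∉ S ∧ b ∉ S ∧ ∀ p : G.Walk a b, ∃ v ∈ p.support, v ∈ S

/-- `C` is a connected component of `G` minus `S`. -/
def IsCompOf {V : Type} (G : SimpleGraph V) (S : Set V) (C : Set V) : Prop :=
  C.Nonempty ∧ Disjoint C S ∧ (G.induce C).Connected ∧
    ∀ D : Set V, C ⊆ D → Disjoint D S → (G.induce D).Connected → D = C

/-- `S` is a separator of `G`: `G` minus `S` has more than one connected component. -/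
def IsSeparator {V : Type} (G : SimpleGraph V) (S : Set V) : Prop :=
  ∃ C D : Set V, IsCompOf G S C ∧ IsCompOf G S D ∧ C ≠ D

/-- `C` is a full component of `S` in `G`. -/
def IsFullCompOf {V : Type} (G : SimpleGraph V) (S : Set V) (C : Set V) : Prop :=
  IsCompOf G S C ∧ nbhd G C = S

/-- `S` is a minimal separator of `G`: it has at least two full components. -/
def IsMinSep {V : Type} (G : SimpleGraph V) (S : Set V) : Prop :=
  ∃ C D : Set V, IsFullCompOf G S C ∧ IsFullCompOf G S D ∧ C ≠ D

/-- `R` crosses `S` if `R` separates some pair of vertices of `S`. -/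
def Crosses {V : Type} (G : SimpleGraph V) (R S : Set V) : Prop :=
  ∃ a b : V, a ∈ S ∧ b ∈ S ∧ Separates G R a b

/-- `G` is chordal: every cycle with more than 3 vertices has a chord. -/
def IsChordal {V : Type} (G : SimpleGraph V) : Prop :=
  ∀ ⦃v : V⦄ (c : G.Walk v v), c.IsCycle → 3 < c.length →
    ∃ u w : V, u ∈ c.support ∧ w ∈ c.support ∧ G.Adj u w ∧ s(u, w) ∉ c.edges

/-- `H` is a triangulation of `G`. -/
def IsTriangulationOf {V : Type} (H G : SimpleGraph V) : Prop :=
  IsChordal H ∧ G ≤ H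

/-- `H` is a minimal triangulation of `G`. -/
def IsMinimalTriangulationOf {V : Type} (H G : SimpleGraph V) : Prop :=
  IsTriangulationOf H G ∧ ∀ H' : SimpleGraph V, IsTriangulationOf H' G → H' ≤ H → H' = H

/-- `K(S)`: the graph on the same vertex type whose edges join all pairs of
distinct vertices of `S`. -/
def completeOn {V : Type} (S : Set V) : SimpleGraph V :=
  SimpleGraph.fromRel (fun a b => a ∈ S ∧ b ∈ S)

/-- `s` is a maximal clique of `G`. -/
def IsMaximalClique {V : Type} (G : SimpleGraph V) (s : Set V) : Prop :=
  G.IsClique s ∧ ∀ t : Set V, G.IsClique t → s ⊆ t → s = t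

/-- `fill G td`: fill every bag of the tree-decomposition `td` into a clique. -/
def fill {V ι : Type} (G : SimpleGraph V) (td : TreeDecomp G ι) : SimpleGraph V :=
  G ⊔ SimpleGraph.fromRel (fun a b => ∃ i : ι, a ∈ td.bag i ∧ b ∈ td.bag i)

/-- The nodes of the maximal subtree `T(i,j)` of the tree containing `i` but not `j`
(for adjacent `i`, `j`): the nodes reachable from `i` after deleting the edge `{i, j}`. -/
def sideNodes {V ι : Type} {G : SimpleGraph V} (td : TreeDecomp G ι) (i j : ι) : Set ι :=
  {t : ι | (td.tree.deleteEdges {s(i, j)}).Reachable i t}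

/-- `V(i,j)`: the union of the bags of nodes in `T(i,j)`, with the vertices of the
bag of `j` removed. -/
def sideVerts {V ι : Type} {G : SimpleGraph V} (td : TreeDecomp G ι) (i j : ι) : Set V :=
  (⋃ t ∈ sideNodes td i j, (td.bag t : Set V)) \ (td.bag j : Set V)

/-- A perfect elimination order of `G`. -/
def IsPerfectElimOrder {V : Type} [Fintype V] (G : SimpleGraph V)
    (e : Fin (Fintype.card V) ≃ V) : Prop :=
  ∀ i : Fin (Fintype.card V),
    G.IsClique {u : V | G.Adj (e i) u ∧ ∃ j : Fin (Fintype.card V), i < j ∧ e j = u}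

/-- `H` is a minor of `G`, via the branch-set (minor model) characterization. -/
def IsMinorOf {W V : Type} (H : SimpleGraph W) (G : SimpleGraph V) : Prop :=
  ∃ B : W → Set V,
    (∀ w : W, (B w).Nonempty) ∧
    (∀ w : W, (G.induce (B w)).Connected) ∧
    (Pairwise fun w₁ w₂ : W => Disjoint (B w₁) (B w₂)) ∧
    ∀ ⦃w₁ w₂ : W⦄, H.Adj w₁ w₂ → ∃ a ∈ B w₁, ∃ b ∈ B w₂, G.Adj a b

/-- There is a clique minor of `G` minus `C` rooted on `R`, given by branch sets
`B v ∋ v` for `v ∈ R`: disjoint from `C`, pairwise disjoint, each connected, with an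
edge of `G` between every two of them. -/
def HasCliqueMinorRootedAvoiding {V : Type} (G : SimpleGraph V) (R C : Set V) : Prop :=
  ∃ B : R → Set V,
    (∀ v : R, (v : V) ∈ B v) ∧
    (∀ v : R, Disjoint (B v) C) ∧
    (∀ v : R, (G.induce (B v)).Connected) ∧
    (∀ u v : R, u ≠ v → Disjoint (B u) (B v)) ∧
    (∀ u v : R, u ≠ v → ∃ a ∈ B u, ∃ b ∈ B v, G.Adj a b)

/-- `S` is a minor-safe separator of `G`: for every component `C` of `G` minus `S`,
there is a clique minor of `G` minus `C` rooted on `N_G(C)`. -/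
def MinorSafe {V : Type} (G : SimpleGraph V) (S : Set V) : Prop :=
  ∀ C : Set V, IsCompOf G S C → HasCliqueMinorRootedAvoiding G (nbhd G C) C

namespace SimpleGraph

lemma Connected.exists_walk_support_subset {α : Type*} {T : SimpleGraph α} {A : Set α}
    (hA : (T.induce A).Connected) {a b : α} (ha : a ∈ A) (hb : b ∈ A) :
    ∃ w : T.Walk a b, ∀ x ∈ w.support, x ∈ A := by
  obtain ⟨w⟩ := hA.preconnected ⟨a, ha⟩ ⟨b, hb⟩
  refine ⟨w.map (Embedding.induce A).toHom, fun x hx => ?_⟩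
  obtain ⟨y, -, rfl⟩ := List.mem_map.1 (Walk.support_map (Embedding.induce A).toHom w ▸ hx)
  exact y.2

lemma Connected.induce_image {α β : Type*} {T : SimpleGraph α} {T' : SimpleGraph β} (f : T →g T')
    {A : Set α} (hA : (T.induce A).Connected) : (T'.induce (f '' A)).Connected := by
  refine hA.map (induceHom f (Set.mapsTo_image f A)) ?_
  rintro ⟨_, a, ha, rfl⟩
  exact ⟨⟨a, ha⟩, rfl⟩

lemma IsAcyclic.edges_subset_of_isPath {α : Type*} {T : SimpleGraph α} (hT : T.IsAcyclic)
    {x y : α} {p : T.Walk x y} (hp : p.IsPath) (w : T.Walk x y) : p.edges ⊆ w.edges := by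
  classical
  have h : p = w.toPath := congrArg Subtype.val ((hT.subsingleton_path x y).elim ⟨p, hp⟩ w.toPath)
  rw [h]
  exact w.edges_toPath_subset_edges

/-- Following a path from a common node of the subtrees `A v` to the subtree `B`, the first node
in `B` lies in every `A v` that meets `B`. -/
lemma IsAcyclic.exists_mem_of_isPath {α κ : Type*} {T : SimpleGraph α} (hT : T.IsAcyclic)
    {A : κ → Set α} {B : Set α} (hA : ∀ v, (T.induce (A v)).Connected)
    (hB : (T.induce B).Connected) (hAB : ∀ v, (A v ∩ B).Nonempty)
    {x y : α} (p : T.Walk x y) (hp : p.IsPath) (hx : ∀ v, x ∈ A v) (hy : y ∈ B) :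
    ∃ m ∈ B, ∀ v, m ∈ A v := by
  induction p with
  | nil => exact ⟨_, hy, hx⟩
  | @cons x x' y h p ih =>
    by_cases hxB : x ∈ B
    · exact ⟨x, hxB, hx⟩
    refine ih (Walk.cons_isPath_iff h p |>.1 hp).1 (fun v => ?_) hy
    obtain ⟨z, hzA, hzB⟩ := hAB v
    obtain ⟨w₁, hw₁⟩ := (hA v).exists_walk_support_subset (hx v) hzA
    obtain ⟨w₂, hw₂⟩ := hB.exists_walk_support_subset hzB hy
    have he : s(x, x') ∈ (w₁.append w₂).edges := hT.edges_subset_of_isPath hp _ (by simp)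
    rw [Walk.edges_append, List.mem_append] at he
    rcases he with he | he
    · exact hw₁ _ (w₁.snd_mem_support_of_mem_edges he)
    · exact absurd (hw₂ _ (w₂.fst_mem_support_of_mem_edges he)) hxB

/-- The Helly property of subtrees of a tree. -/
lemma IsTree.helly {α κ : Type*} {T : SimpleGraph α} (hT : T.IsTree) {A : κ → Set α}
    (s : Finset κ) (hA : ∀ v ∈ s, (T.induce (A v)).Connected)
    (hAA : ∀ u ∈ s, ∀ v ∈ s, (A u ∩ A v).Nonempty) : ∃ m, ∀ v ∈ s, m ∈ A v := by
  classical
  induction s using Finset.induction_on with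
  | empty => exact ⟨hT.connected.nonempty.some, by simp⟩
  | @insert b s _ ih =>
    obtain ⟨x, hx⟩ := ih (fun v hv => hA v (Finset.mem_insert_of_mem hv))
      (fun u hu v hv => hAA u (Finset.mem_insert_of_mem hu) v (Finset.mem_insert_of_mem hv))
    have hb := Finset.mem_insert_self b s
    obtain ⟨y, hy, -⟩ := hAA b hb b hb
    obtain ⟨p, hp⟩ := hT.connected.exists_isPath x y
    obtain ⟨m, hmB, hm⟩ := hT.isAcyclic.exists_mem_of_isPath (A := fun v : s => A v)
      (fun v => hA v (Finset.mem_insert_of_mem v.2)) (hA b hb)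
      (fun v => hAA v (Finset.mem_insert_of_mem v.2) b hb) p hp (fun v => hx v v.2) hy
    refine ⟨m, fun v hv => ?_⟩
    rcases Finset.mem_insert.1 hv with rfl | hv
    · exact hmB
    · exact hm ⟨v, hv⟩

lemma Walk.exists_reachable_of_sum_deleteEdges {α β : Type*} {T : SimpleGraph α}
    {T' : SimpleGraph β} {e : Sym2 α} {x y : α ⊕ β}
    (w : ((T ⊕g T').deleteEdges {e.map Sum.inl}).Walk x y) {a : α} (hx : x = Sum.inl a) :
    ∃ b, y = Sum.inl b ∧ (T.deleteEdges {e}).Reachable a b := by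
  induction w generalizing a with
  | nil => exact ⟨a, hx, Reachable.rfl⟩
  | @cons x z y h w ih =>
    subst hx
    rcases z with c | c
    · obtain ⟨b, hb, hr⟩ := ih rfl
      refine ⟨b, hb, Reachable.trans (Adj.reachable ?_) hr⟩
      rw [deleteEdges_adj] at h ⊢
      refine ⟨by simpa using h.1, fun he => h.2 ?_⟩
      rw [Set.mem_singleton_iff] at he ⊢
      rw [← he, Sym2.map_mk]
    · simp [deleteEdges_adj] at h

lemma isBridge_sum_inl {α β : Type*} {T : SimpleGraph α} {T' : SimpleGraph β} {u v : α}
    (h : T.IsBridge s(u, v)) : (T ⊕g T').IsBridge s(Sum.inl u, Sum.inl v) := by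
  rw [isBridge_iff] at h ⊢
  rintro ⟨w⟩
  obtain ⟨b, hb, hr⟩ := Walk.exists_reachable_of_sum_deleteEdges (e := s(u, v)) w rfl
  exact h (Sum.inl_injective hb ▸ hr)

lemma IsAcyclic.sum {α β : Type*} {T : SimpleGraph α} {T' : SimpleGraph β} (hT : T.IsAcyclic)
    (hT' : T'.IsAcyclic) : (T ⊕g T').IsAcyclic := by
  rw [isAcyclic_iff_forall_adj_isBridge] at hT hT' ⊢
  rintro (a | a) (b | b) h
  · exact isBridge_sum_inl (hT (by simpa using h))
  · simp at h
  · simp at h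
  · have hbr := isBridge_sum_inl (T' := T) (hT' (v := a) (w := b) (by simpa using h))
    rw [isBridge_iff] at hbr ⊢
    refine fun hr => hbr (hr.map ⟨Sum.swap, ?_⟩)
    rintro (c | c) (d | d) h' <;> simp_all [deleteEdges_adj]

lemma IsTree.sum_sup_edge {α β : Type*} {T : SimpleGraph α} {T' : SimpleGraph β} (hT : T.IsTree)
    (hT' : T'.IsTree) (i : α) (j : β) : ((T ⊕g T') ⊔ edge (Sum.inl i) (Sum.inr j)).IsTree :=
  ⟨hT.connected.sum_sup_edge hT'.connected,
    (hT.isAcyclic.sum hT'.isAcyclic).sup_edge_of_not_reachable (not_reachable_sum_inl_inr i j)⟩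

end SimpleGraph

/-- The nodes whose bags meet a connected vertex set form a subtree. -/
lemma TreeDecomp.connected_induce_of_connected {V ι : Type} {G : SimpleGraph V}
    (td : TreeDecomp G ι) {X : Set V} (hX : (G.induce X).Connected) :
    (td.tree.induce {i | ∃ x ∈ X, x ∈ td.bag i}).Connected := by
  have hsub : ∀ x ∈ X, {i | x ∈ td.bag i} ⊆ {i | ∃ x ∈ X, x ∈ td.bag i} :=
    fun x hx i hi => ⟨x, hx, hi⟩
  have key : ∀ (x y : X), (G.induce X).Walk x y → ∀ (i j : ι) (hi : (x : V) ∈ td.bag i)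
      (hj : (y : V) ∈ td.bag j), (td.tree.induce {i | ∃ x ∈ X, x ∈ td.bag i}).Reachable
        ⟨i, x, x.2, hi⟩ ⟨j, y, y.2, hj⟩ := by
    intro x y w
    have single : ∀ (x : X) (i j : ι) (hi : (x : V) ∈ td.bag i)
      (hj : (x : V) ∈ td.bag j), (td.tree.induce {i | ∃ x ∈ X, x ∈ td.bag i}).Reachable
        ⟨i, x, x.2, hi⟩ ⟨j, x, x.2, hj⟩ := fun x i j hi hj =>
      ((td.bags_connected x).preconnected ⟨i, hi⟩ ⟨j, hj⟩).map
        (SimpleGraph.induceHomOfLE _ (hsub x x.2)).toHom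
    induction w with
    | nil => exact single _
    | @cons x z y h w ih =>
      intro i j hi hj
      obtain ⟨k, hkx, hkz⟩ := td.edges_covered h
      exact (single x i k hi hkx).trans (ih k j hkz hj)
  obtain ⟨x⟩ := hX.nonempty
  obtain ⟨i, hi⟩ := td.bags_cover x
  have : Nonempty {i | ∃ x ∈ X, x ∈ td.bag i} := ⟨⟨i, x, x.2, hi⟩⟩
  refine ⟨?_⟩
  rintro ⟨i, x, hx, hi⟩ ⟨j, y, hy, hj⟩
  obtain ⟨w⟩ := hX.preconnected ⟨x, hx⟩ ⟨y, hy⟩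
  exact key _ _ w i j hi hj

/-- Contracting a connected set `D` that sees all of `S` onto `q ∈ S`, and then restricting to
`W`, turns the bags of a tree-decomposition of `G` into bags on the same tree for `G[W] ∪ K(S)`,
one of which contains `S`. -/
lemma TreeDecomp.exists_contracted_bags {V ι : Type} [Fintype V] {G : SimpleGraph V}
    (td : TreeDecomp G ι) {S D W : Set V} {q : V} (hq : q ∈ S) (hclique : G.IsClique (S \ {q}))
    (hD : (G.induce D).Connected) (hDS : ∀ s ∈ S, ∃ d ∈ D, G.Adj d s) (hSW : S ⊆ W)
    (hDW : Disjoint D W) :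
    ∃ bag : ι → Finset V, (∀ i, (bag i).card ≤ (td.bag i).card) ∧ (∀ i, ∀ v ∈ bag i, v ∈ W) ∧
      (∀ v ∈ W, (td.tree.induce {i | v ∈ bag i}).Connected) ∧
      (∀ u ∈ W, ∀ v ∈ W, G.Adj u v → ∃ i, u ∈ bag i ∧ v ∈ bag i) ∧
      ∃ i, ∀ s ∈ S, s ∈ bag i := by
  classical
  let f : V → V := fun x => if x ∈ D then q else x
  have hfD : ∀ x ∈ D, f x = q := fun x hx => if_pos hx
  have hfW : ∀ x ∈ W, f x = x := fun x hx => if_neg fun h => Set.disjoint_left.1 hDW h hx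
  let bag : ι → Finset V := fun i => ((td.bag i).image f).filter (· ∈ W)
  have hbag : ∀ i v, v ∈ bag i ↔ v ∈ W ∧ ∃ x ∈ f ⁻¹' {v}, x ∈ td.bag i := by
    intro i v
    simp only [bag, Finset.mem_filter, Finset.mem_image, Set.mem_preimage, Set.mem_singleton_iff]
    grind
  have hmem : ∀ i, ∀ v ∈ W, v ∈ td.bag i → v ∈ bag i :=
    fun i v hv hi => (hbag i v).2 ⟨hv, v, hfW v hv, hi⟩
  have hconn : ∀ v ∈ W, (td.tree.induce {i | v ∈ bag i}).Connected := by
    intro v hv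
    have hfib : (G.induce (f ⁻¹' {v})).Connected := by
      by_cases hvq : v = q
      · subst hvq
        obtain ⟨d, hd, hdv⟩ := hDS v hq
        have : f ⁻¹' {v} = D ∪ {v} := by
          ext x
          by_cases hx : x ∈ D <;> simp [f, hx]
        rw [this]
        exact SimpleGraph.connected_induce_union hD.preconnected
          SimpleGraph.Preconnected.of_subsingleton hd rfl hdv
      · have : f ⁻¹' {v} = {v} := by
          ext x
          have hvD : v ∉ D := fun h => Set.disjoint_left.1 hDW h hv
          by_cases hx : x ∈ D
          · simp [f, hx, Ne.symm hvq, ne_of_mem_of_not_mem hx hvD]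
          · simp [f, hx]
        rw [this]
        exact SimpleGraph.Connected.of_subsingleton
    have : {i | v ∈ bag i} = {i | ∃ x ∈ f ⁻¹' {v}, x ∈ td.bag i} := by
      ext i
      exact (hbag i v).trans (and_iff_right hv)
    rw [this]
    exact td.connected_induce_of_connected hfib
  have hedge : ∀ u ∈ W, ∀ v ∈ W, G.Adj u v → ∃ i, u ∈ bag i ∧ v ∈ bag i := by
    intro u hu v hv h
    obtain ⟨i, hui, hvi⟩ := td.edges_covered h
    exact ⟨i, hmem i u hu hui, hmem i v hv hvi⟩
  have hedge_q : ∀ s ∈ S, ∃ i, q ∈ bag i ∧ s ∈ bag i := by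
    intro s hs
    obtain ⟨d, hd, hds⟩ := hDS s hs
    obtain ⟨i, hdi, hsi⟩ := td.edges_covered hds
    exact ⟨i, (hbag i q).2 ⟨hSW hq, d, hfD d hd, hdi⟩, hmem i s (hSW hs) hsi⟩
  refine ⟨bag, fun i => (Finset.card_filter_le _ _).trans Finset.card_image_le,
    fun i v hv => ((hbag i v).1 hv).1, hconn, hedge, ?_⟩
  obtain ⟨m, hm⟩ := td.isTree.helly (A := fun v => {i | v ∈ bag i}) S.toFinset
    (fun v hv => hconn v (hSW (Set.mem_toFinset.1 hv))) (by
      intro u hu v hv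
      rw [Set.mem_toFinset] at hu hv
      by_cases huq : u = q
      · exact huq ▸ hedge_q v hv
      by_cases hvq : v = q
      · obtain ⟨i, h⟩ := hedge_q u hu
        exact ⟨i, h.2, hvq ▸ h.1⟩
      by_cases huv : u = v
      · obtain ⟨i, h⟩ := hedge_q u hu
        exact ⟨i, h.2, huv ▸ h.2⟩
      exact hedge u (hSW hu) v (hSW hv) (hclique ⟨hu, huq⟩ ⟨hv, hvq⟩ huv))
  exact ⟨m, fun s hs => hm s (Set.mem_toFinset.2 hs)⟩

lemma IsCompOf.disjoint {V : Type} {G : SimpleGraph V} {S C D : Set V} (hC : IsCompOf G S C)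
    (hD : IsCompOf G S D) (hne : C ≠ D) : Disjoint C D := by
  by_contra h
  have hconn := SimpleGraph.induce_union_connected hC.2.2.1.preconnected hD.2.2.1.preconnected
    (Set.not_disjoint_iff_nonempty_inter.1 h)
  have hdisj : Disjoint (C ∪ D) S := Set.disjoint_union_left.2 ⟨hC.2.1, hD.2.1⟩
  exact hne ((hC.2.2.2 _ Set.subset_union_left hdisj hconn).symm.trans
    (hD.2.2.2 _ Set.subset_union_right hdisj hconn))

/-- Any tree-decomposition of `G` yields one of `G ∪ K(S)` of no larger width. -/
lemma TreeDecomp.exists_sup_completeOn {V ι : Type} [Fintype V] {G : SimpleGraph V} {S : Set V}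
    (hac : ∃ q ∈ S, G.IsClique (S \ {q})) (hminsep : IsMinSep G S) (td : TreeDecomp G ι) {n : ℕ}
    (hn : ∀ i, (td.bag i).card ≤ n) :
    ∃ td' : TreeDecomp (G ⊔ completeOn S) (ι ⊕ ι), ∀ i, (td'.bag i).card ≤ n := by
  obtain ⟨q, hq, hclique⟩ := hac
  obtain ⟨C, D, ⟨hC, hCS⟩, ⟨hD, hDS⟩, hne⟩ := hminsep
  have hCD := hC.disjoint hD hne
  have hseesC : ∀ s ∈ S, ∃ d ∈ C, G.Adj d s := fun s hs => (hCS.symm ▸ hs : s ∈ nbhd G C).2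
  have hseesD : ∀ s ∈ S, ∃ d ∈ D, G.Adj d s := fun s hs => (hDS.symm ▸ hs : s ∈ nbhd G D).2
  obtain ⟨b₁, hcard₁, hW₁, hconn₁, hedge₁, i₁, hi₁⟩ := td.exists_contracted_bags (W := C ∪ S) hq
    hclique hD.2.2.1 hseesD Set.subset_union_right
    (Set.disjoint_union_right.2 ⟨hCD.symm, hD.2.1⟩)
  obtain ⟨b₂, hcard₂, hW₂, hconn₂, hedge₂, i₂, hi₂⟩ := td.exists_contracted_bags (W := Cᶜ) hq
    hclique hC.2.2.1 hseesC (Set.subset_compl_iff_disjoint_left.2 hC.2.1)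
    disjoint_compl_right
  have hadjC : ∀ u ∈ C, ∀ v, G.Adj u v → v ∈ C ∪ S := fun u hu v h =>
    or_iff_not_imp_left.2 fun hv => hCS ▸ (⟨hv, u, hu, h⟩ : v ∈ nbhd G C)
  have hset : ∀ v, {x | v ∈ Sum.elim b₁ b₂ x} =
      Sum.inl '' {i | v ∈ b₁ i} ∪ Sum.inr '' {i | v ∈ b₂ i} := by
    intro v
    ext (x | x) <;> simp
  let T := (td.tree ⊕g td.tree) ⊔ SimpleGraph.edge (Sum.inl i₁) (Sum.inr i₂)
  have hconn_inl : ∀ v ∈ C ∪ S, (T.induce (Sum.inl '' {i | v ∈ b₁ i})).Connected := fun v hv =>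
    (hconn₁ v hv).induce_image
      ((SimpleGraph.Hom.ofLE le_sup_left).comp SimpleGraph.Embedding.sumInl.toHom)
  have hconn_inr : ∀ v ∈ Cᶜ, (T.induce (Sum.inr '' {i | v ∈ b₂ i})).Connected := fun v hv =>
    (hconn₂ v hv).induce_image
      ((SimpleGraph.Hom.ofLE le_sup_left).comp SimpleGraph.Embedding.sumInr.toHom)
  have hconn : ∀ v, (T.induce {x | v ∈ Sum.elim b₁ b₂ x}).Connected := by
    intro v
    rw [hset]
    by_cases hvC : v ∈ C
    · have : {i | v ∈ b₂ i} = ∅ := Set.eq_empty_of_forall_notMem fun i hi => hW₂ i v hi hvC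
      rw [this, Set.image_empty, Set.union_empty]
      exact hconn_inl v (Or.inl hvC)
    by_cases hvS : v ∈ S
    · exact SimpleGraph.connected_induce_union (hconn_inl v (Or.inr hvS)).preconnected
        (hconn_inr v hvC).preconnected ⟨i₁, hi₁ v hvS, rfl⟩ ⟨i₂, hi₂ v hvS, rfl⟩
        (by simp [T, SimpleGraph.edge])
    · have : {i | v ∈ b₁ i} = ∅ :=
        Set.eq_empty_of_forall_notMem fun i hi => (hW₁ i v hi).elim hvC hvS
      rw [this, Set.image_empty, Set.empty_union]
      exact hconn_inr v hvC
  refine ⟨{ tree := T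
            isTree := td.isTree.sum_sup_edge td.isTree i₁ i₂
            bag := Sum.elim b₁ b₂
            bags_cover := fun v => ?_
            edges_covered := fun u v h => ?_
            bags_connected := hconn }, ?_⟩
  · obtain ⟨x⟩ := (hconn v).nonempty
    exact ⟨x, x.2⟩
  · rcases h with h | h
    · have hl : ∀ {u v}, u ∈ C → G.Adj u v → ∃ x, u ∈ Sum.elim b₁ b₂ x ∧ v ∈ Sum.elim b₁ b₂ x := by
        intro u v hu h
        obtain ⟨i, hi⟩ := hedge₁ u (Or.inl hu) v (hadjC u hu v h) h
        exact ⟨Sum.inl i, hi⟩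
      by_cases hu : u ∈ C
      · exact hl hu h
      by_cases hv : v ∈ C
      · obtain ⟨x, hx⟩ := hl hv h.symm
        exact ⟨x, hx.symm⟩
      obtain ⟨i, hi⟩ := hedge₂ u hu v hv h
      exact ⟨Sum.inr i, hi⟩
    · have huv : u ∈ S ∧ v ∈ S := by
        rw [completeOn, SimpleGraph.fromRel_adj] at h
        tauto
      exact ⟨Sum.inl i₁, hi₁ u huv.1, hi₁ v huv.2⟩
  · rintro (i | i)
    · exact (hcard₁ i).trans (hn i)
    · exact (hcard₂ i).trans (hn i)

/-- filling an almost-clique minimal separator into a clique does not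
increase the treewidth. -/
theorem treewidth_fill_almostClique_minSep {V : Type} [Fintype V] (G : SimpleGraph V)
    (S : Set V) (hac : ∃ q ∈ S, G.IsClique (S \ {q})) (hminsep : IsMinSep G S) :
    treewidth (G ⊔ completeOn S) = treewidth G := by
  unfold treewidth
  congr 1
  ext k
  constructor
  · rintro ⟨ι, td, htd⟩
    exact ⟨ι, { td with edges_covered := fun u v h => td.edges_covered (Or.inl h) }, htd⟩
  · rintro ⟨ι, td, htd⟩
    obtain ⟨td', htd'⟩ := td.exists_sup_completeOn hac hminsep htd
    exact ⟨ι ⊕ ι, td', htd'⟩
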